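/- arXiv:1605.03046 — 2 statements merged into one kernel-verified Lean document; each statement's English description precedes it below -/
import Mathlib

section
/- Fix positive reals p₋₁, p₀, p₁ with p₁ < p₋₁ (negative drift), and let P(1) = p₋₁ + p₀ + p₁. Let f_{n,h} denote the total weight of Motzkin walks of length n whose height equals h, and define X_n by P[X_n = h] = f_{n,h}/P(1)ⁿ. Then X_n converges in distribution to a geometric law: for every fixed h ∈ ℕ, lim_{n→∞} f_{n,h}/P(1)ⁿ = (p₁/p₋₁)^h · (1 − p₁/p₋₁). -/
open scoped BigOperators Classical

/-- Value of a step encoded by `Fin 3`: `0 ↦ -1`, `1 ↦ 0`, `2 ↦ +1`. -/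
def stepVal (s : Fin 3) : ℤ := (s : ℤ) - 1

/-- Weight of a single step: `p₋₁` for `-1`, `p₀` for `0`, `p₁` for `+1`. -/
def stepWeight (pm p0 p1 : ℝ) (s : Fin 3) : ℝ :=
  if s = 0 then pm else if s = 1 then p0 else p1

/-- Weight of a Motzkin walk (product of its step weights). -/
def walkWeight (pm p0 p1 : ℝ) {n : ℕ} (w : Fin n → Fin 3) : ℝ :=
  ∏ i, stepWeight pm p0 p1 (w i)

/-- Partial sum `ω_j` of the walk `w`. -/
def psum {n : ℕ} (w : Fin n → Fin 3) (j : ℕ) : ℤ :=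
  ∑ i ∈ Finset.univ.filter (fun i : Fin n => (i : ℕ) < j), stepVal (w i)

/-- Total weight of Motzkin bridges of length `n`. -/
noncomputable def bridgeW (pm p0 p1 : ℝ) (n : ℕ) : ℝ :=
  ∑ w ∈ Finset.univ.filter (fun w : Fin n → Fin 3 => psum w n = 0),
    walkWeight pm p0 p1 w

/-- Number of returns to zero of a walk of length `n`. -/
def retZero {n : ℕ} (w : Fin n → Fin 3) : ℕ :=
  ((Finset.Icc 1 n).filter (fun j => psum w j = 0)).card

/-- Total weight of walks of length `n` with exactly `k` returns to zero. -/
noncomputable def walkRetW (pm p0 p1 : ℝ) (n k : ℕ) : ℝ :=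
  ∑ w ∈ Finset.univ.filter (fun w : Fin n → Fin 3 => retZero w = k),
    walkWeight pm p0 p1 w

/-- Number of sign changes of a walk of length `n`. -/
def signChanges {n : ℕ} (w : Fin n → Fin 3) : ℕ :=
  (((Finset.range (n+1)) ×ˢ (Finset.range (n+1))).filter
    (fun p => p.1 < p.2 ∧ psum w p.1 * psum w p.2 < 0 ∧
      ∀ l ∈ Finset.Ioo p.1 p.2, psum w l = 0)).card

/-- Total weight of bridges of length `n` with exactly `k` sign changes. -/
noncomputable def bridgeSignW (pm p0 p1 : ℝ) (n k : ℕ) : ℝ :=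
  ∑ w ∈ Finset.univ.filter
      (fun w : Fin n → Fin 3 => psum w n = 0 ∧ signChanges w = k),
    walkWeight pm p0 p1 w

/-- Total weight of positive excursions of length `n`. -/
noncomputable def posExcW (pm p0 p1 : ℝ) (n : ℕ) : ℝ :=
  ∑ w ∈ Finset.univ.filter
      (fun w : Fin n → Fin 3 => psum w n = 0 ∧ ∀ j ∈ Finset.range (n+1), 0 ≤ psum w j),
    walkWeight pm p0 p1 w

/-- Total weight of negative excursions of length `n`. -/
noncomputable def negExcW (pm p0 p1 : ℝ) (n : ℕ) : ℝ :=
  ∑ w ∈ Finset.univ.filter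
      (fun w : Fin n → Fin 3 => psum w n = 0 ∧ ∀ j ∈ Finset.range (n+1), psum w j ≤ 0),
    walkWeight pm p0 p1 w

/-- A positive bridge: a bridge whose last nonzero partial sum is positive. -/
def IsPosBridge {n : ℕ} (w : Fin n → Fin 3) : Prop :=
  psum w n = 0 ∧ ∃ j ∈ Finset.range (n+1),
    0 < psum w j ∧ ∀ l ∈ Finset.Ioc j n, psum w l = 0

/-- A negative bridge: a bridge whose last nonzero partial sum is negative. -/
def IsNegBridge {n : ℕ} (w : Fin n → Fin 3) : Prop :=
  psum w n = 0 ∧ ∃ j ∈ Finset.range (n+1),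
    psum w j < 0 ∧ ∀ l ∈ Finset.Ioc j n, psum w l = 0

instance {n : ℕ} (w : Fin n → Fin 3) : Decidable (IsPosBridge w) := by
  unfold IsPosBridge; infer_instance

instance {n : ℕ} (w : Fin n → Fin 3) : Decidable (IsNegBridge w) := by
  unfold IsNegBridge; infer_instance

/-- Total weight of positive bridges of length `n` with `k` sign changes. -/
noncomputable def posBridgeSignW (pm p0 p1 : ℝ) (n k : ℕ) : ℝ :=
  ∑ w ∈ Finset.univ.filter
      (fun w : Fin n → Fin 3 => IsPosBridge w ∧ signChanges w = k),
    walkWeight pm p0 p1 w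

/-- Total weight of negative bridges of length `n` with `k` sign changes. -/
noncomputable def negBridgeSignW (pm p0 p1 : ℝ) (n k : ℕ) : ℝ :=
  ∑ w ∈ Finset.univ.filter
      (fun w : Fin n → Fin 3 => IsNegBridge w ∧ signChanges w = k),
    walkWeight pm p0 p1 w

/-- Total weight of walks of length `n` with `k` sign changes. -/
noncomputable def walkSignW (pm p0 p1 : ℝ) (n k : ℕ) : ℝ :=
  ∑ w ∈ Finset.univ.filter (fun w : Fin n → Fin 3 => signChanges w = k),
    walkWeight pm p0 p1 w

/-- Height of a walk of length `n` (as a natural number; it is `max_j ω_j ≥ 0`). -/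
def height {n : ℕ} (w : Fin n → Fin 3) : ℕ :=
  (Finset.range (n+1)).sup (fun j => (psum w j).toNat)

/-- Total weight of walks of length `n` of height exactly `h`. -/
noncomputable def heightW (pm p0 p1 : ℝ) (n h : ℕ) : ℝ :=
  ∑ w ∈ Finset.univ.filter (fun w : Fin n → Fin 3 => height w = h),
    walkWeight pm p0 p1 w

/-!
Let `u n k` be the probability that a walk of length `n`, with step probabilities `a`, `b`, `c`
(down, flat, up), reaches level `k`. Conditioning on the first step gives `u (n + 1) = T (u n)`
for a monotone linear operator `T`, where `u 0` is the indicator of `0`. As `n → ∞` the iterates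
increase to a fixed point of `T`. A geometric sequence `ρ ^ k` is fixed exactly when `ρ` is a root
of `a ρ ^ 2 + b ρ + c = ρ`, i.e. `1` or `c / a`; with `ρ` the smaller root it dominates all the
iterates. Its difference `w` from the limit is a fixed point with `w 0 = 0` and `0 ≤ w k ≤ ρ ^ k`.
The recursion preserves `a * w (k + 1) - c * w k`, which forces `(k + 1) * ρ ^ k * w 1 ≤ w (k + 1)`;
so `w 1 = 0`, and then `w = 0`.
-/

open Filter Function Set Topology

theorem exists_isFixedPt_tendsto_iterate {α : Type*} [ConditionallyCompleteLattice α]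
    [TopologicalSpace α] [SupConvergenceClass α] [OrderClosedTopology α] {f : α → α}
    (hf : Monotone f) (hcont : Continuous f) {x y : α} (hx : x ≤ f x) (hy : f y ≤ y)
    (hxy : x ≤ y) :
    ∃ v, IsFixedPt f v ∧ x ≤ v ∧ v ≤ y ∧ Tendsto (fun n => f^[n] x) atTop (𝓝 v) := by
  have hmono : Monotone fun n => f^[n] x := hf.monotone_iterate_of_le_map hx
  have hle (n : ℕ) : f^[n] x ≤ y :=
    (hf.iterate n hxy).trans (hf.antitone_iterate_of_map_le hy n.zero_le)
  have hlim := tendsto_atTop_ciSup hmono ⟨y, forall_mem_range.2 hle⟩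
  exact ⟨_, isFixedPt_of_tendsto_iterate hlim hcont.continuousAt, hmono.ge_of_tendsto hlim 0,
    le_of_tendsto' hlim hle, hlim⟩

/-- First-step operator for the probabilities `v k` that a walk with step probabilities `a`, `b`,
`c` (down, flat, up) reaches level `k`. A down step moves the target away, hence the
coefficient `a` of `v (k + 2)`. Level `0` is reached at the start, so `v 0` is kept. -/
def firstStep (a b c : ℝ) (v : ℕ → ℝ) : ℕ → ℝ
  | 0 => v 0
  | k + 1 => a * v (k + 2) + b * v (k + 1) + c * v k

section FirstStep

variable {a b c : ℝ}

theorem monotone_firstStep (ha : 0 ≤ a) (hb : 0 ≤ b) (hc : 0 ≤ c) :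
    Monotone (firstStep a b c) := by
  rintro v w hvw (_ | k)
  · exact hvw 0
  · simp only [firstStep]
    gcongr <;> exact hvw _

theorem continuous_firstStep : Continuous (firstStep a b c) := by
  refine continuous_pi fun k => ?_
  cases k <;> simp only [firstStep] <;> fun_prop

theorem firstStep_sub (v w : ℕ → ℝ) :
    firstStep a b c (v - w) = firstStep a b c v - firstStep a b c w := by
  ext (_ | k) <;> simp only [firstStep, Pi.sub_apply]
  ring

theorem single_le_firstStep_single (hc : 0 ≤ c) :
    Pi.single 0 1 ≤ firstStep a b c (Pi.single 0 1) := by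
  rintro (_ | _ | k) <;> simp [firstStep, hc]

theorem isFixedPt_firstStep_pow {ρ : ℝ} (hρ : a * ρ ^ 2 + b * ρ + c = ρ) :
    IsFixedPt (firstStep a b c) (fun k => ρ ^ k) := by
  ext (_ | k)
  · rfl
  · simp only [firstStep]
    linear_combination ρ ^ k * hρ

theorem quadratic_min_one_div (ha : a ≠ 0) (habc : a + b + c = 1) :
    a * min 1 (c / a) ^ 2 + b * min 1 (c / a) + c = min 1 (c / a) := by
  rcases min_choice 1 (c / a) with h | h <;> rw [h]
  · linear_combination habc
  · field_simp
    linear_combination c * habc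

theorem mul_succ_sub_mul_of_isFixedPt_firstStep {w : ℕ → ℝ} (habc : a + b + c = 1)
    (hw : IsFixedPt (firstStep a b c) w) (k : ℕ) :
    a * w (k + 1) - c * w k = a * w 1 - c * w 0 := by
  induction k with
  | zero => rfl
  | succ k ih =>
    have hk : a * w (k + 2) + b * w (k + 1) + c * w k = w (k + 1) := congrFun hw (k + 1)
    linear_combination hk + ih - w (k + 1) * habc

theorem succ_mul_pow_mul_le {w : ℕ → ℝ} (ha : 0 < a) (hc : 0 ≤ c) (hw1 : 0 ≤ w 1)
    (hw : ∀ k, a * w (k + 1) = a * w 1 + c * w k) (k : ℕ) :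
    (k + 1) * min 1 (c / a) ^ k * w 1 ≤ w (k + 1) := by
  set ρ := min 1 (c / a)
  have hρ0 : 0 ≤ ρ := by positivity
  have hρc : ρ * a ≤ c := (le_div_iff₀ ha).1 (min_le_right _ _)
  induction k with
  | zero => simp
  | succ k ih =>
    refine le_of_mul_le_mul_left ?_ ha
    calc a * ((↑(k + 1) + 1) * ρ ^ (k + 1) * w 1)
        = a * (ρ ^ (k + 1) * w 1) + ρ * a * ((k + 1) * ρ ^ k * w 1) := by push_cast; ring
      _ ≤ a * (1 * w 1) + c * w (k + 1) := by
        gcongr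
        exact pow_le_one₀ hρ0 (min_le_left _ _)
      _ = a * w (k + 2) := by rw [one_mul, hw (k + 1)]

theorem eq_zero_of_isFixedPt_firstStep {w : ℕ → ℝ} (ha : 0 < a) (hc : 0 ≤ c)
    (habc : a + b + c = 1) (hw : IsFixedPt (firstStep a b c) w) (hw0 : w 0 = 0)
    (hnonneg : 0 ≤ w) (hle : ∀ k, w k ≤ min 1 (c / a) ^ k) : w = 0 := by
  have hsucc (k : ℕ) : a * w (k + 1) = a * w 1 + c * w k := by
    linear_combination mul_succ_sub_mul_of_isFixedPt_firstStep habc hw k - c * hw0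
  have hw1_le : w 1 ≤ 0 := by
    by_contra! hw1_pos
    set ρ := min 1 (c / a)
    have hρ : 0 < ρ := by simpa using hw1_pos.trans_le (hle 1)
    obtain ⟨k, hk⟩ := exists_nat_gt (ρ / w 1)
    have hbound : (k + 1) * w 1 ≤ ρ := by
      refine le_of_mul_le_mul_left ?_ (pow_pos hρ k)
      calc ρ ^ k * ((k + 1) * w 1) = (k + 1) * ρ ^ k * w 1 := by ring
        _ ≤ w (k + 1) := succ_mul_pow_mul_le ha hc hw1_pos.le hsucc k
        _ ≤ ρ ^ k * ρ := hle (k + 1)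
    linarith [(div_lt_iff₀ hw1_pos).1 hk]
  have hw1 : w 1 = 0 := hw1_le.antisymm (hnonneg 1)
  funext k
  induction k with
  | zero => exact hw0
  | succ k ih => simpa [hw1, ih, ha.ne'] using hsucc k

theorem tendsto_iterate_firstStep (ha : 0 < a) (hb : 0 ≤ b) (hc : 0 ≤ c)
    (habc : a + b + c = 1) :
    Tendsto (fun n => (firstStep a b c)^[n] (Pi.single 0 1)) atTop
      (𝓝 fun k => min 1 (c / a) ^ k) := by
  have hfix := isFixedPt_firstStep_pow (quadratic_min_one_div ha.ne' habc)
  have hle : Pi.single 0 1 ≤ fun k => min 1 (c / a) ^ k := by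
    rintro (_ | k)
    · simp
    · simp only [Pi.single_eq_of_ne (Nat.succ_ne_zero k)]
      positivity
  obtain ⟨v, hv, hv_ge, hv_le, hlim⟩ := exists_isFixedPt_tendsto_iterate
    (monotone_firstStep ha.le hb hc) continuous_firstStep (single_le_firstStep_single hc)
    hfix.le hle
  have hv_nonneg : 0 ≤ v := (Pi.single_nonneg.2 zero_le_one).trans hv_ge
  have hv0 : v 0 = 1 := (by simpa using hv_le 0 : v 0 ≤ 1).antisymm (by simpa using hv_ge 0)
  have hdiff : (fun k => min 1 (c / a) ^ k) - v = 0 := by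
    refine eq_zero_of_isFixedPt_firstStep ha hc habc ?_ (by simp [hv0]) (sub_nonneg.2 hv_le)
      fun k => sub_le_self _ (hv_nonneg k)
    rw [IsFixedPt, firstStep_sub, hfix, hv]
  rwa [sub_eq_zero.1 hdiff]

end FirstStep

section Walk

variable {n : ℕ}

theorem psum_zero (w : Fin n → Fin 3) : psum w 0 = 0 := by
  simp [psum]

theorem psum_cons_succ (s : Fin 3) (w : Fin n → Fin 3) (j : ℕ) :
    psum (Fin.cons s w : Fin (n + 1) → Fin 3) (j + 1) = stepVal s + psum w j := by
  simp [psum, Finset.sum_filter, Fin.sum_univ_succ]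

theorem psum_cons_image_Iic (s : Fin 3) (w : Fin n → Fin 3) :
    psum (Fin.cons s w : Fin (n + 1) → Fin 3) '' Iic (n + 1) =
      insert 0 ((stepVal s + ·) '' (psum w '' Iic n)) := by
  ext x
  simp only [mem_image, mem_Iic, mem_insert_iff, image_image, ← Nat.lt_succ_iff]
  rw [Nat.exists_lt_succ_left]
  simp only [psum_zero, psum_cons_succ, eq_comm]

theorem isGreatest_height (w : Fin n → Fin 3) :
    IsGreatest (psum w '' Iic n) (height w : ℤ) := by
  constructor
  · obtain ⟨j, hj, hmax⟩ : ∃ j ∈ Finset.range (n + 1), height w = (psum w j).toNat :=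
      Finset.exists_mem_eq_sup _ ⟨0, by simp⟩ _
    rcases le_total 0 (psum w j) with hpos | hneg
    · exact ⟨j, Finset.mem_range_succ_iff.1 hj, by omega⟩
    · exact ⟨0, n.zero_le, by rw [psum_zero]; omega⟩
  · rintro _ ⟨j, hj, rfl⟩
    exact Int.toNat_le.1 <| Finset.le_sup (f := fun j => (psum w j).toNat)
      (Finset.mem_range_succ_iff.2 hj)

theorem natCast_height_cons (s : Fin 3) (w : Fin n → Fin 3) :
    (height (Fin.cons s w : Fin (n + 1) → Fin 3) : ℤ) = max 0 (stepVal s + height w) := by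
  refine (isGreatest_height _).unique ?_
  rw [psum_cons_image_Iic]
  exact ((add_right_mono (a := stepVal s)).map_isGreatest (isGreatest_height w)).insert 0

theorem succ_le_height_cons_iff {s : Fin 3} {k m : ℕ} (hm : m + stepVal s = k + 1)
    (w : Fin n → Fin 3) :
    k + 1 ≤ height (Fin.cons s w : Fin (n + 1) → Fin 3) ↔ m ≤ height w := by
  have hcons := natCast_height_cons s w
  omega

theorem walkWeight_cons (pm p0 p1 : ℝ) (s : Fin 3) (w : Fin n → Fin 3) :
    walkWeight pm p0 p1 (Fin.cons s w : Fin (n + 1) → Fin 3) =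
      stepWeight pm p0 p1 s * walkWeight pm p0 p1 w := by
  simp [walkWeight, Fin.prod_univ_succ]

theorem sum_univ_eq_sum_cons {α M : Type*} [Fintype α] [AddCommMonoid M]
    (f : (Fin (n + 1) → α) → M) :
    ∑ w, f w = ∑ s : α, ∑ w : Fin n → α, f (Fin.cons s w) := by
  rw [← Fintype.sum_prod_type']
  exact (Fintype.sum_equiv (Fin.consEquiv fun _ => α) _ _ fun _ => rfl).symm

end Walk

/-- Total weight of walks of length `n` of height at least `k`. -/
noncomputable def heightTailW (pm p0 p1 : ℝ) (n k : ℕ) : ℝ :=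
  ∑ w : Fin n → Fin 3 with k ≤ height w, walkWeight pm p0 p1 w

section HeightTail

variable (pm p0 p1 : ℝ)

theorem heightW_eq_heightTailW_sub (n h : ℕ) :
    heightW pm p0 p1 n h = heightTailW pm p0 p1 n h - heightTailW pm p0 p1 n (h + 1) := by
  simp only [heightW, heightTailW, Finset.sum_filter, ← Finset.sum_sub_distrib]
  refine Finset.sum_congr rfl fun w _ => ?_
  split_ifs <;> first | omega | simp

theorem heightTailW_zero_right (n : ℕ) : heightTailW pm p0 p1 n 0 = (pm + p0 + p1) ^ n := by
  have hstep : pm + p0 + p1 = ∑ s, stepWeight pm p0 p1 s := by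
    simp [Fin.sum_univ_three, stepWeight]
  simp [heightTailW, walkWeight, hstep, Fintype.sum_pow]

theorem heightTailW_zero_left : heightTailW pm p0 p1 0 = Pi.single 0 1 := by
  ext (_ | k)
  · simp [heightTailW_zero_right]
  · simp [heightTailW, height, psum]

theorem heightTailW_succ_succ (n k : ℕ) :
    heightTailW pm p0 p1 (n + 1) (k + 1) =
      pm * heightTailW pm p0 p1 n (k + 2) + p0 * heightTailW pm p0 p1 n (k + 1) +
        p1 * heightTailW pm p0 p1 n k := by
  have hdown (w : Fin n → Fin 3) :=
    succ_le_height_cons_iff (s := 0) (k := k) (m := k + 2) (by norm_num [stepVal, add_assoc]) w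
  have hflat (w : Fin n → Fin 3) :=
    succ_le_height_cons_iff (s := 1) (k := k) (m := k + 1) (by simp [stepVal]) w
  have hup (w : Fin n → Fin 3) :=
    succ_le_height_cons_iff (s := 2) (k := k) (m := k) (by simp [stepVal]) w
  simp only [heightTailW, Finset.sum_filter, sum_univ_eq_sum_cons, Fin.sum_univ_three,
    hdown, hflat, hup, walkWeight_cons, Finset.mul_sum, mul_ite, mul_zero]
  simp [stepWeight]

variable {pm p0 p1}

theorem heightTailW_div_pow (hP : pm + p0 + p1 ≠ 0) (n : ℕ) :
    (fun k => heightTailW pm p0 p1 n k / (pm + p0 + p1) ^ n) =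
      (firstStep (pm / (pm + p0 + p1)) (p0 / (pm + p0 + p1)) (p1 / (pm + p0 + p1)))^[n]
        (Pi.single 0 1) := by
  induction n with
  | zero => simp [heightTailW_zero_left]
  | succ n ih =>
    rw [iterate_succ_apply', ← ih]
    ext (_ | k)
    · simp [firstStep, heightTailW_zero_right, hP]
    · simp only [firstStep, heightTailW_succ_succ]
      field_simp
      ring

theorem tendsto_heightTailW_div_pow (hpm : 0 < pm) (hp0 : 0 ≤ p0) (hp1 : 0 ≤ p1) (k : ℕ) :
    Tendsto (fun n => heightTailW pm p0 p1 n k / (pm + p0 + p1) ^ n) atTop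
      (𝓝 (min 1 (p1 / pm) ^ k)) := by
  have hP : 0 < pm + p0 + p1 := by positivity
  have hlim := tendsto_iterate_firstStep (div_pos hpm hP) (div_nonneg hp0 hP.le)
    (div_nonneg hp1 hP.le) (by rw [← add_div, ← add_div, div_self hP.ne'])
  simp only [← heightTailW_div_pow hP.ne', div_div_div_cancel_right₀ hP.ne'] at hlim
  exact tendsto_pi_nhds.1 hlim k

end HeightTail

theorem height_geometric_general {pm p0 p1 : ℝ} (hpm : 0 < pm) (hp0 : 0 ≤ p0) (hp1 : 0 ≤ p1)
    (h : ℕ) :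
    Tendsto (fun n => heightW pm p0 p1 n h / (pm + p0 + p1) ^ n) atTop
      (𝓝 (min 1 (p1 / pm) ^ h * (1 - min 1 (p1 / pm)))) := by
  have htail := tendsto_heightTailW_div_pow hpm hp0 hp1
  simpa only [heightW_eq_heightTailW_sub, sub_div, mul_one_sub, ← pow_succ] using
    (htail h).sub (htail (h + 1))

/-- **Limit law for the height of Motzkin walks, negative drift**: the height converges
in distribution to `Geom(p₁/p₋₁)`. -/
theorem height_geometric (pm p0 p1 : ℝ)
    (hpm : 0 < pm) (hp0 : 0 < p0) (hp1 : 0 < p1) (hdrift : p1 < pm) :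
    let P1 : ℝ := pm + p0 + p1
    ∀ h : ℕ,
      Filter.Tendsto (fun n : ℕ => heightW pm p0 p1 n h / P1 ^ n)
        Filter.atTop (nhds ((p1 / pm) ^ h * (1 - p1 / pm))) := by
  intro P1 h
  simpa only [min_eq_right ((div_lt_one hpm).2 hdrift).le] using
    height_geometric_general hpm hp0.le hp1.le h
end

section
/- Fix positive reals p₋₁, p₀, p₁ with p₁ > p₋₁ (positive drift), let P(1) = p₋₁ + p₀ + p₁ and δ = p₁ − p₋₁, and set μ = δ/P(1) and σ² = 1 − p₀/P(1) − (δ/P(1))² (which is positive). Let f_{n,h} denote the total weight of Motzkin walks of length n whose height equals h. Then the standardized height converges in distribution to the standard normal law: for every real x, lim_{n→∞} (Σ_{h ≤ μn + xσ√n} f_{n,h})/P(1)ⁿ = Φ(x), where Φ(x) = (1/√(2π)) ∫_{−∞}^x exp(−t²/2) dt. -/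
open scoped BigOperators Classical

/-!
Write `S` for the walk, started at `0`, and `M n` for its running maximum. Read backwards in time,
`M n - S n` is the maximum of the first `n + 1` values of a walk with the law of `-S`. Positive
drift sends `S` to `+∞` by the strong law of large numbers, so these maxima stay bounded almost
surely and `(M n - S n) / √n → 0` in probability. Hence `M n` inherits the central limit theorem
of `S n`.
-/

open Filter MeasureTheory ProbabilityTheory
open scoped Topology

/-- The reversal `i ↦ n - 1 - i` of the indices below `n`, extended by the identity to an
injection of `ℕ`; it turns a walk of length `n` into the walk read backwards. -/
def reverseBelow (n i : ℕ) : ℕ := if i < n then n - 1 - i else i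

lemma reverseBelow_injective (n : ℕ) : Function.Injective (reverseBelow n) := by
  intro i j h
  unfold reverseBelow at h
  split_ifs at h <;> omega

lemma sum_range_sub_sum_range_eq_neg_sum_reverseBelow {G : Type*} [AddCommGroup G] (x : ℕ → G)
    {j n : ℕ} (hj : j ≤ n) :
    ∑ i ∈ Finset.range j, x i - ∑ i ∈ Finset.range n, x i =
      -∑ i ∈ Finset.range (n - j), x (reverseBelow n i) := by
  rw [← neg_sub, ← Finset.sum_Ico_eq_sub x hj, Finset.sum_Ico_eq_sum_range,
    ← Finset.sum_range_reflect]
  refine congrArg _ (Finset.sum_congr rfl fun i hi => congrArg x ?_)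
  rw [Finset.mem_range] at hi
  rw [reverseBelow, if_pos (by omega)]
  omega

lemma partialSups_sum_sub_sum_eq_partialSups_neg_sum_reverseBelow {G : Type*} [AddCommGroup G]
    [Lattice G] [IsOrderedAddMonoid G] (x : ℕ → G) (n : ℕ) :
    partialSups (fun j => ∑ i ∈ Finset.range j, x i) n - ∑ i ∈ Finset.range n, x i =
      partialSups (fun j => -∑ i ∈ Finset.range j, x (reverseBelow n i)) n := by
  apply le_antisymm
  · refine sub_le_iff_le_add.2 (partialSups_le _ _ _ fun j hj => sub_le_iff_le_add.1 ?_)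
    rw [sum_range_sub_sum_range_eq_neg_sum_reverseBelow x hj]
    exact le_partialSups_of_le (fun j => -∑ i ∈ Finset.range j, x (reverseBelow n i))
      (Nat.sub_le n j)
  · refine partialSups_le _ _ _ fun j hj => ?_
    nth_rw 1 [← Nat.sub_sub_self hj]
    rw [← sum_range_sub_sum_range_eq_neg_sum_reverseBelow x (Nat.sub_le n j)]
    exact sub_le_sub_right (le_partialSups_of_le (fun j => ∑ i ∈ Finset.range j, x i)
      (Nat.sub_le n j)) _

lemma tendsto_mul_partialSups_neg_of_tendsto_atTop {a s : ℕ → ℝ} (ha : Tendsto a atTop (𝓝 0))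
    (hs : Tendsto s atTop atTop) : Tendsto (fun n => a n * partialSups (-s) n) atTop (𝓝 0) := by
  have hbdd : BddAbove (Set.range (-s)) :=
    (tendsto_neg_atTop_atBot.comp hs).isBoundedUnder_le_atBot.bddAbove_range
  simpa only [zero_mul] using ha.mul <|
    tendsto_atTop_ciSup (partialSups_monotone (-s)) (bddAbove_range_partialSups.2 hbdd)

lemma measurable_partialSups {α : Type*} [MeasurableSpace α] [SemilatticeSup α]
    [MeasurableSup₂ α] (n : ℕ) : Measurable fun x : ℕ → α => partialSups x n := by
  simp_rw [partialSups_eq_sup'_range]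
  exact Finset.measurable_range_sup'' fun j _ => measurable_pi_apply j

lemma gaussianReal_real_Iic_mul_sqrt {v : NNReal} (hv : v ≠ 0) (x : ℝ) :
    (gaussianReal 0 v).real (Set.Iic (x * √v)) = (gaussianReal 0 1).real (Set.Iic x) := by
  have hsqrt : 0 < √(v : ℝ) := Real.sqrt_pos.2 (NNReal.coe_pos.2 (pos_iff_ne_zero.2 hv))
  have hmap : (gaussianReal 0 1).map (√(v : ℝ) * ·) = gaussianReal 0 v := by
    rw [gaussianReal_map_const_mul, mul_zero, mul_one]
    exact congrArg _ (NNReal.eq (Real.sq_sqrt v.coe_nonneg))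
  rw [← hmap, map_measureReal_apply (measurable_const_mul _) measurableSet_Iic, mul_comm x]
  congr 1
  ext z
  exact mul_le_mul_iff_right₀ hsqrt

lemma gaussianReal_real_Iic (x : ℝ) :
    (gaussianReal 0 1).real (Set.Iic x) =
      (√(2 * Real.pi))⁻¹ * ∫ t in Set.Iic x, Real.exp (-t ^ 2 / 2) := by
  rw [measureReal_def, gaussianReal_apply_eq_integral 0 one_ne_zero,
    ENNReal.toReal_ofReal (integral_nonneg fun _ => gaussianPDFReal_nonneg _ _ _),
    ← integral_const_mul]
  simp [gaussianPDFReal]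

section RandomWalk

variable {Ω Ω' : Type*} [MeasurableSpace Ω] [MeasurableSpace Ω'] {P : Measure Ω} {P' : Measure Ω'}

lemma tendstoInMeasure_of_identDistrib {ι E : Type*} [PseudoEMetricSpace E] [MeasurableSpace E]
    [OpensMeasurableSpace E] {X : ι → Ω → E} {Y : ι → Ω' → E} {l : Filter ι} {c : E}
    (hXY : ∀ i, IdentDistrib (X i) (Y i) P P') (hX : TendstoInMeasure P X l fun _ => c) :
    TendstoInMeasure P' Y l fun _ => c := by
  intro ε hε
  refine (hX ε hε).congr fun i => (hXY i).measure_mem_eq (s := {x | ε ≤ edist x c}) ?_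
  exact measurableSet_le measurable_const (measurable_edist_left (x := c))

lemma identDistrib_comp_of_injective {ι E : Type*} [Countable ι] [MeasurableSpace E]
    {X : ι → Ω → E} (hindep : iIndepFun X P) (hident : ∀ i j, IdentDistrib (X i) (X j) P P)
    {σ : ι → ι} (hσ : σ.Injective) :
    IdentDistrib (fun ω i => X i ω) (fun ω i => X (σ i) ω) P P :=
  .pi (fun i => hident i (σ i)) hindep (hindep.precomp hσ)

variable {X : ℕ → Ω → ℝ}

lemma ae_tendsto_sum_range_atTop (hpos : 0 < P[X 0])
    (hindep : Pairwise (Function.onFun (· ⟂ᵢ[P] ·) X))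
    (hident : ∀ i, IdentDistrib (X i) (X 0) P P) :
    ∀ᵐ ω ∂P, Tendsto (fun n => ∑ i ∈ Finset.range n, X i ω) atTop atTop := by
  have hint : Integrable (X 0) P := .of_integral_ne_zero hpos.ne'
  filter_upwards [strong_law_ae_real X hint hindep hident] with ω hω
  refine (hω.pos_mul_atTop hpos tendsto_natCast_atTop_atTop).congr' ?_
  filter_upwards [eventually_ne_atTop 0] with n hn
  exact div_mul_cancel₀ _ (Nat.cast_ne_zero.2 hn)

lemma tendstoInMeasure_mul_partialSups_neg_sum_range [IsFiniteMeasure P] {a : ℕ → ℝ}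
    (ha : Tendsto a atTop (𝓝 0)) (hpos : 0 < P[X 0])
    (hindep : Pairwise (Function.onFun (· ⟂ᵢ[P] ·) X))
    (hident : ∀ i, IdentDistrib (X i) (X 0) P P) :
    TendstoInMeasure P
      (fun n ω => a n * partialSups (fun j => -∑ i ∈ Finset.range j, X i ω) n) atTop 0 := by
  have hX (i : ℕ) : AEMeasurable (X i) P := (hident i).aemeasurable_fst
  refine tendstoInMeasure_of_tendsto_ae (fun n => ?_) ?_
  · exact ((measurable_partialSups n).comp_aemeasurable
      (aemeasurable_pi_lambda _ fun j => by fun_prop)).const_mul (a n) |>.aestronglyMeasurable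
  · filter_upwards [ae_tendsto_sum_range_atTop hpos hindep hident] with ω hω
    exact tendsto_mul_partialSups_neg_of_tendsto_atTop ha hω

lemma tendstoInMeasure_mul_partialSups_sum_range_sub {a : ℕ → ℝ}
    (ha : Tendsto a atTop (𝓝 0)) (hpos : 0 < P[X 0]) (hindep : iIndepFun X P)
    (hident : ∀ i, IdentDistrib (X i) (X 0) P P) :
    TendstoInMeasure P (fun n ω => a n * (partialSups (fun j => ∑ i ∈ Finset.range j, X i ω) n -
      ∑ i ∈ Finset.range n, X i ω)) atTop 0 := by
  have := hindep.isProbabilityMeasure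
  simp_rw [partialSups_sum_sub_sum_eq_partialSups_neg_sum_reverseBelow]
  refine tendstoInMeasure_of_identDistrib (fun n => ?_)
    (tendstoInMeasure_mul_partialSups_neg_sum_range ha hpos
      (fun _ _ => hindep.indepFun) hident)
  have hmeas : Measurable fun x : ℕ → ℝ =>
      a n * partialSups (fun j => -∑ i ∈ Finset.range j, x i) n :=
    ((measurable_partialSups n).comp (by fun_prop)).const_mul (a n)
  exact (identDistrib_comp_of_injective hindep
    (fun i j => (hident i).trans (hident j).symm) (reverseBelow_injective n)).comp hmeas

theorem tendstoInDistribution_partialSups_sum_range_sub [IsProbabilityMeasure P]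
    [IsProbabilityMeasure P'] {Y : Ω' → ℝ}
    (hY : HasLaw Y (gaussianReal 0 Var[X 0; P].toNNReal) P') (hX : MemLp (X 0) 2 P)
    (hpos : 0 < P[X 0]) (hindep : iIndepFun X P) (hident : ∀ i, IdentDistrib (X i) (X 0) P P) :
    TendstoInDistribution (fun (n : ℕ) ω =>
      (√n)⁻¹ * (partialSups (fun j => ∑ i ∈ Finset.range j, X i ω) n - n * P[X 0])) atTop Y
      (fun _ => P) P' := by
  have hsqrt : Tendsto (fun n : ℕ => (√n)⁻¹) atTop (𝓝 0) :=
    tendsto_inv_atTop_zero.comp (Real.tendsto_sqrt_atTop.comp tendsto_natCast_atTop_atTop)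
  refine tendstoInDistribution_of_tendstoInMeasure_sub _ Y
    (tendstoInDistribution_inv_sqrt_mul_sum_sub hY hX hindep hident) ?_ fun n => ?_
  · convert tendstoInMeasure_mul_partialSups_sum_range_sub hsqrt hpos hindep hident using 3 with n ω
    simp only [Pi.sub_apply]
    ring
  · have hmeas (i : ℕ) : AEMeasurable (X i) P := (hident i).aemeasurable_fst
    exact (((measurable_partialSups n).comp_aemeasurable
      (aemeasurable_pi_lambda _ fun j => by fun_prop)).sub_const _).const_mul _

theorem tendsto_measureReal_le_of_tendstoInDistribution {Z : ℕ → Ω → ℝ} {Y : Ω' → ℝ} {x : ℝ}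
    [IsProbabilityMeasure P] [IsProbabilityMeasure P'] (hx : P'.map Y {x} = 0)
    (h : TendstoInDistribution Z atTop Y (fun _ => P) P') :
    Tendsto (fun n => P.real {ω | Z n ω ≤ x}) atTop (𝓝 ((P'.map Y).real (Set.Iic x))) := by
  have hport := ProbabilityMeasure.tendsto_measure_of_null_frontier_of_tendsto' h.tendsto
    (E := Set.Iic x) (by simpa using hx)
  have : IsProbabilityMeasure (P'.map Y) := Measure.isProbabilityMeasure_map h.aemeasurable_limit
  refine ((ENNReal.tendsto_toReal (measure_ne_top (P'.map Y) _)).comp hport).congr fun n => ?_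
  exact map_measureReal_apply_of_aemeasurable (h.forall_aemeasurable n) measurableSet_Iic

theorem tendsto_measureReal_partialSups_sum_range_le
    (hX : MemLp (X 0) 2 P) (hpos : 0 < P[X 0]) (hvar : 0 < Var[X 0; P]) (hindep : iIndepFun X P)
    (hident : ∀ i, IdentDistrib (X i) (X 0) P P) (x : ℝ) :
    Tendsto (fun n : ℕ => P.real {ω | partialSups (fun j => ∑ i ∈ Finset.range j, X i ω) n ≤
      P[X 0] * n + x * √Var[X 0; P] * √n}) atTop (𝓝 ((gaussianReal 0 1).real (Set.Iic x))) := by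
  have := hindep.isProbabilityMeasure
  have hv : Var[X 0; P].toNNReal ≠ 0 := (Real.toNNReal_pos.2 hvar).ne'
  have : NullSingletonClass (gaussianReal 0 Var[X 0; P].toNNReal) :=
    nullSingletonClass_gaussianReal hv
  have hlim := tendsto_measureReal_le_of_tendstoInDistribution (x := x * √Var[X 0; P])
    (by rw [Measure.map_id, measure_singleton])
    (tendstoInDistribution_partialSups_sum_range_sub .id hX hpos hindep hident)
  have hcdf := gaussianReal_real_Iic_mul_sqrt hv x
  rw [Real.coe_toNNReal _ hvar.le] at hcdf
  rw [Measure.map_id, hcdf] at hlim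
  refine hlim.congr' ?_
  filter_upwards [eventually_gt_atTop 0] with n hn
  have hsqrt : 0 < √(n : ℝ) := Real.sqrt_pos.2 (Nat.cast_pos.2 hn)
  congr 1
  ext ω
  rw [Set.mem_ofPred_eq, Set.mem_ofPred_eq, inv_mul_le_iff₀' hsqrt, sub_le_iff_le_add',
    mul_comm (n : ℝ)]

end RandomWalk

section Motzkin

variable {pm p0 p1 : ℝ}

lemma coe_height_eq_partialSups {n : ℕ} (w : Fin n → Fin 3) :
    (height w : ℤ) = partialSups (psum w) n := by
  have hnonneg : 0 ≤ partialSups (psum w) n :=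
    le_partialSups_of_le (psum w) (Nat.zero_le n) |>.trans' (by simp [psum])
  apply le_antisymm
  · rw [← Int.toNat_of_nonneg hnonneg, Nat.cast_le]
    exact Finset.sup_le fun j hj => Int.toNat_le_toNat <|
      le_partialSups_of_le (psum w) (Finset.mem_range_succ_iff.1 hj)
  · refine partialSups_le _ _ _ fun j hj => (Int.self_le_toNat _).trans (Nat.cast_le.2 ?_)
    exact Finset.le_sup (f := fun j => (psum w j).toNat) (Finset.mem_range_succ_iff.2 hj)

lemma height_le {n : ℕ} (w : Fin n → Fin 3) : height w ≤ n := by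
  refine Finset.sup_le fun j _ => Int.toNat_le.2 ?_
  calc psum w j ≤ ∑ _ ∈ Finset.univ.filter (fun i : Fin n => (i : ℕ) < j), (1 : ℤ) :=
        Finset.sum_le_sum fun i _ => by have := (w i).isLt; unfold stepVal; omega
    _ ≤ n := by simpa using Finset.card_filter_le (Finset.univ : Finset (Fin n)) _

lemma sum_heightW_filter_le (n : ℕ) (y : ℝ) :
    ∑ h ∈ (Finset.range (n + 1)).filter (fun h : ℕ => (h : ℝ) ≤ y), heightW pm p0 p1 n h =
      ∑ w : Fin n → Fin 3 with (height w : ℝ) ≤ y, walkWeight pm p0 p1 w := by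
  simp only [heightW, Finset.sum_fiberwise_eq_sum_filter, Finset.mem_filter,
    Finset.mem_range_succ_iff, height_le, true_and]

lemma stepWeight_nonneg (hpm : 0 ≤ pm) (hp0 : 0 ≤ p0) (hp1 : 0 ≤ p1) (s : Fin 3) :
    0 ≤ stepWeight pm p0 p1 s := by
  unfold stepWeight
  split_ifs <;> assumption

lemma sum_stepWeight : ∑ s, stepWeight pm p0 p1 s = pm + p0 + p1 := by
  simp [Fin.sum_univ_three, stepWeight]

/-- The walk formed by the first `n` steps of an infinite walk. -/
def initialWalk {α : Type*} (n : ℕ) (ω : ℕ → α) : Fin n → α := fun i => ω i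

lemma psum_initialWalk {n j : ℕ} (hj : j ≤ n) (ω : ℕ → Fin 3) :
    psum (initialWalk n ω) j = ∑ i ∈ Finset.range j, stepVal (ω i) := by
  have hfilter : (Finset.range n).filter (· < j) = Finset.range j := by
    ext i
    simp only [Finset.mem_filter, Finset.mem_range]
    omega
  rw [psum, Finset.sum_filter, ← hfilter, Finset.sum_filter]
  exact Fin.sum_univ_eq_sum_range (fun i => if i < j then stepVal (ω i) else 0) n

lemma coe_height_initialWalk (n : ℕ) (ω : ℕ → Fin 3) :
    (height (initialWalk n ω) : ℝ) =
      partialSups (fun j => ∑ i ∈ Finset.range j, (stepVal (ω i) : ℝ)) n := by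
  rw [← Int.cast_natCast, coe_height_eq_partialSups, partialSups_eq_sup'_range,
    partialSups_eq_sup'_range, Finset.apply_sup'_eq_sup'_comp _ _ Int.cast_mono.map_sup]
  refine Finset.sup'_congr _ rfl fun j hj => ?_
  rw [Function.comp_apply, psum_initialWalk (Finset.mem_range_succ_iff.1 hj), Int.cast_sum]

lemma infinitePi_map_initialWalk {α : Type*} [MeasurableSpace α] (μ : Measure α)
    [IsProbabilityMeasure μ] (n : ℕ) :
    (Measure.infinitePi fun _ : ℕ => μ).map (initialWalk n) = Measure.pi fun _ : Fin n => μ := by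
  have hindep : iIndepFun (fun (i : Fin n) (ω : ℕ → α) => ω i) (Measure.infinitePi fun _ => μ) :=
    (iIndepFun_infinitePi fun _ => measurable_id).precomp Fin.val_injective
  have hmap := (iIndepFun_iff_map_fun_eq_infinitePi_map fun i => by fun_prop).1 hindep
  simp only [Measure.infinitePi_map_eval, Measure.infinitePi_eq_pi] at hmap
  exact hmap

lemma infinitePi_real_initialWalk {α : Type*} [Fintype α] [MeasurableSpace α]
    [MeasurableSingletonClass α] (p : PMF α) (n : ℕ) (A : (Fin n → α) → Prop) :
    (Measure.infinitePi fun _ : ℕ => p.toMeasure).real {ω | A (initialWalk n ω)} =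
      ∑ w with A w, ∏ i, (p (w i)).toReal := by
  have hmeas : Measurable (initialWalk (α := α) n) := by unfold initialWalk; fun_prop
  have hset : {ω | A (initialWalk n ω)} =
    initialWalk n ⁻¹' (Finset.univ.filter A : Finset (Fin n → α)) := by ext; simp
  rw [hset, ← map_measureReal_apply hmeas (Finset.measurableSet _), infinitePi_map_initialWalk,
    ← sum_measureReal_singleton]
  simp [measureReal_def, ENNReal.toReal_prod]

lemma identDistrib_eval_infinitePi {ι α E : Type*} [MeasurableSpace α] [MeasurableSpace E]
    (μ : Measure α) [IsProbabilityMeasure μ] {f : α → E} (hf : Measurable f) (i : ι) :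
    IdentDistrib (fun ω : ι → α => f (ω i)) f (Measure.infinitePi fun _ => μ) μ :=
  IdentDistrib.comp (f := fun ω : ι → α => ω i) (g := id)
    ⟨(measurable_pi_apply i).aemeasurable, aemeasurable_id, by
      rw [Measure.infinitePi_map_eval, Measure.map_id]⟩ hf

/-- The law of a single step: steps are drawn with probability proportional to their weight. -/
noncomputable def stepPMF (hpm : 0 ≤ pm) (hp0 : 0 ≤ p0) (hp1 : 0 < p1) : PMF (Fin 3) :=
  .ofFintype (fun s => ENNReal.ofReal (stepWeight pm p0 p1 s / (pm + p0 + p1))) <| by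
    rw [← ENNReal.ofReal_sum_of_nonneg fun s _ =>
        div_nonneg (stepWeight_nonneg hpm hp0 hp1.le s) (by positivity),
      ← Finset.sum_div, sum_stepWeight, div_self (by positivity), ENNReal.ofReal_one]

lemma one_sub_div_sub_sq_div_pos (hpm : 0 ≤ pm) (hp0 : 0 ≤ p0) (hpos : 0 < pm + p0)
    (hp1 : 0 < p1) :
    0 < 1 - p0 / (pm + p0 + p1) - ((p1 - pm) / (pm + p0 + p1)) ^ 2 := by
  have hnum : 1 - p0 / (pm + p0 + p1) - ((p1 - pm) / (pm + p0 + p1)) ^ 2 =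
      (4 * pm * p1 + p0 * (pm + p1)) / (pm + p0 + p1) ^ 2 := by
    field_simp
    ring
  rw [hnum]
  refine div_pos ?_ (by positivity)
  nlinarith [mul_pos hpos hp1, mul_nonneg hpm hp1.le, mul_nonneg hp0 hpm]

variable (hpm : 0 ≤ pm) (hp0 : 0 ≤ p0) (hp1 : 0 < p1)

lemma toReal_stepPMF (s : Fin 3) :
    (stepPMF hpm hp0 hp1 s).toReal = stepWeight pm p0 p1 s / (pm + p0 + p1) :=
  ENNReal.toReal_ofReal (div_nonneg (stepWeight_nonneg hpm hp0 hp1.le s) (by positivity))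

lemma integral_stepVal_stepPMF (f : ℤ → ℝ) :
    ∫ s, f (stepVal s) ∂(stepPMF hpm hp0 hp1).toMeasure =
      (pm * f (-1) + p0 * f 0 + p1 * f 1) / (pm + p0 + p1) := by
  rw [PMF.integral_eq_sum, Fin.sum_univ_three, toReal_stepPMF, toReal_stepPMF, toReal_stepPMF,
    add_div, add_div, mul_div_right_comm, mul_div_right_comm, mul_div_right_comm]
  rfl

lemma mean_stepVal_stepPMF :
    ∫ s, (stepVal s : ℝ) ∂(stepPMF hpm hp0 hp1).toMeasure = (p1 - pm) / (pm + p0 + p1) := by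
  rw [integral_stepVal_stepPMF hpm hp0 hp1 (fun k => (k : ℝ))]
  push_cast
  ring

lemma variance_stepVal_stepPMF :
    Var[fun s => (stepVal s : ℝ); (stepPMF hpm hp0 hp1).toMeasure] =
      1 - p0 / (pm + p0 + p1) - ((p1 - pm) / (pm + p0 + p1)) ^ 2 := by
  have hP1 : pm + p0 + p1 ≠ 0 := by positivity
  have hsq := integral_stepVal_stepPMF hpm hp0 hp1 (fun k => (k : ℝ) ^ 2)
  rw [variance_eq_sub .of_discrete, mean_stepVal_stepPMF]
  simp only [Pi.pow_apply, hsq]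
  push_cast
  field_simp
  ring

lemma sum_heightW_filter_div_pow (n : ℕ) (y : ℝ) :
    (∑ h ∈ (Finset.range (n + 1)).filter (fun h : ℕ => (h : ℝ) ≤ y), heightW pm p0 p1 n h) /
        (pm + p0 + p1) ^ n =
      (Measure.infinitePi fun _ : ℕ => (stepPMF hpm hp0 hp1).toMeasure).real
        {ω | partialSups (fun j => ∑ i ∈ Finset.range j, (stepVal (ω i) : ℝ)) n ≤ y} := by
  simp_rw [← coe_height_initialWalk]
  rw [infinitePi_real_initialWalk (stepPMF hpm hp0 hp1) n fun w => (height w : ℝ) ≤ y,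
    sum_heightW_filter_le, Finset.sum_div]
  refine Finset.sum_congr rfl fun w _ => ?_
  simp only [toReal_stepPMF, Finset.prod_div_distrib, walkWeight, Finset.prod_const,
    Finset.card_univ, Fintype.card_fin]

end Motzkin

-- Dyck walks are the case `p0 = 0`.
theorem height_normal_general (pm p0 p1 : ℝ)
    (hpm : 0 ≤ pm) (hp0 : 0 ≤ p0) (hpos : 0 < pm + p0) (hdrift : pm < p1) :
    let P1 : ℝ := pm + p0 + p1
    let δ : ℝ := p1 - pm
    let μ : ℝ := δ / P1
    let σ : ℝ := Real.sqrt (1 - p0 / P1 - (δ / P1) ^ 2)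
    0 < 1 - p0 / P1 - (δ / P1) ^ 2 ∧
    ∀ x : ℝ,
      Tendsto
        (fun n : ℕ =>
          (∑ h ∈ (Finset.range (n + 1)).filter (fun h : ℕ => (h : ℝ) ≤ μ * n + x * σ * √n),
            heightW pm p0 p1 n h) / P1 ^ n)
        atTop (𝓝 ((√(2 * Real.pi))⁻¹ * ∫ t in Set.Iic x, Real.exp (-t ^ 2 / 2))) := by
  intro P1 δ μ σ
  have hp1 : 0 < p1 := hpm.trans_lt hdrift
  have hσ : 0 < 1 - p0 / P1 - (δ / P1) ^ 2 := one_sub_div_sub_sq_div_pos hpm hp0 hpos hp1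
  refine ⟨hσ, fun x => ?_⟩
  let X (i : ℕ) (ω : ℕ → Fin 3) : ℝ := stepVal (ω i)
  let p := (stepPMF hpm hp0 hp1).toMeasure
  have hX (i : ℕ) : IdentDistrib (X i) (fun s => (stepVal s : ℝ)) (.infinitePi fun _ => p) p :=
    identDistrib_eval_infinitePi p (f := fun s => (stepVal s : ℝ)) (measurable_of_finite _) i
  have hmean : ∫ ω, X 0 ω ∂(.infinitePi fun _ => p) = μ :=
    (hX 0).integral_eq.trans (mean_stepVal_stepPMF hpm hp0 hp1)
  have hvar : Var[X 0; .infinitePi fun _ => p] = 1 - p0 / P1 - (δ / P1) ^ 2 :=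
    (hX 0).variance_eq.trans (variance_stepVal_stepPMF hpm hp0 hp1)
  have hindep : iIndepFun X (.infinitePi fun _ => p) :=
    iIndepFun_infinitePi (X := fun _ s => (stepVal s : ℝ)) fun _ => measurable_of_finite _
  have hlim := tendsto_measureReal_partialSups_sum_range_le
    ((hX 0).symm.memLp_snd .of_discrete) (hmean ▸ div_pos (sub_pos.2 hdrift) (by positivity))
    (hvar ▸ hσ) hindep (fun i => (hX i).trans (hX 0).symm) x
  rw [hmean, hvar, gaussianReal_real_Iic] at hlim
  simpa only [P1, sum_heightW_filter_div_pow hpm hp0 hp1] using hlim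

/-- **Limit law for the height of Motzkin walks, positive drift**: the standardized
height converges in distribution to the standard normal law. -/
theorem height_normal (pm p0 p1 : ℝ)
    (hpm : 0 < pm) (hp0 : 0 < p0) (hp1 : 0 < p1) (hdrift : pm < p1) :
    let P1 : ℝ := pm + p0 + p1
    let δ : ℝ := p1 - pm
    let μ : ℝ := δ / P1
    let σ : ℝ := Real.sqrt (1 - p0 / P1 - (δ / P1) ^ 2)
    0 < 1 - p0 / P1 - (δ / P1) ^ 2 ∧
    ∀ x : ℝ,
      Filter.Tendsto
        (fun n : ℕ =>
          (∑ h ∈ (Finset.range (n + 1)).filter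
              (fun h : ℕ => (h : ℝ) ≤ μ * n + x * σ * Real.sqrt n),
            heightW pm p0 p1 n h) / P1 ^ n)
        Filter.atTop
        (nhds ((Real.sqrt (2 * Real.pi))⁻¹ *
          ∫ t in Set.Iic x, Real.exp (-t ^ 2 / 2))) := by
  exact height_normal_general pm p0 p1 hpm.le hp0.le (add_pos hpm hp0) hdrift
end
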